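/- arXiv:1901.02179 — 5 statements merged into one kernel-verified Lean document; each statement's English description precedes it below -/
import Mathlib

section
/- The set of objective values of the POP equals the set of objective values of the conic program over Γ^A ∩ J: { f_0(w) : w ∈ ℝ^n, w ≥ 0, f_i(w) = 0 (i = 1,…,m) } = { ⟨Q^0, X⟩ : X ∈ Γ^A, ⟨Q^i, X⟩ = 0 (i = 1,…,m), ⟨H^0, X⟩ = 1 }. Consequently ζ* := inf{ f_0(w) : w ≥ 0, f_i(w) = 0 (i=1,…,m) } equals inf{ ⟨Q^0, X⟩ : X ∈ Γ^A ∩ J, ⟨H^0, X⟩ = 1 } (infima taken in the extended reals). -/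
open MvPolynomial

noncomputable section

open scoped Classical

variable {n : ℕ}

/-- The vector `u^A(x)` of monomials `x^α` for `α ∈ A`. -/
def uA (A : Finset (Fin (n+1) →₀ ℕ)) (x : Fin (n+1) → ℝ) (a : A) : ℝ :=
  ∏ i, x i ^ (a : Fin (n+1) →₀ ℕ) i

/-- The rank-one moment matrix `u^A(x) u^A(x)ᵀ`. -/
def momMat (A : Finset (Fin (n+1) →₀ ℕ)) (x : Fin (n+1) → ℝ) : Matrix A A ℝ :=
  fun a b => uA A x a * uA A x b

/-- The cone `Γ^A = { u^A(x) u^A(x)ᵀ : x ∈ ℝ^{1+n}, x ≥ 0 }`. -/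
def GammaA (A : Finset (Fin (n+1) →₀ ℕ)) : Set (Matrix A A ℝ) :=
  { X | ∃ x : Fin (n+1) → ℝ, (∀ i, 0 ≤ x i) ∧ X = momMat A x }

/-- The extended completely positive cone `CPP^A = conv Γ^A`. -/
def CPPA (A : Finset (Fin (n+1) →₀ ℕ)) : Set (Matrix A A ℝ) :=
  convexHull ℝ (GammaA A)

/-- The trace inner product `⟨P, X⟩ = Σ_{a,b} P_{ab} X_{ab}`. -/
def ip {A : Finset (Fin (n+1) →₀ ℕ)} (P X : Matrix A A ℝ) : ℝ :=
  ∑ a : A, ∑ b : A, P a b * X a b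

/-- The matrix `H^0` whose `(α^ω, α^ω)` entry is `1` and all other entries are `0`. -/
def H0mat (A : Finset (Fin (n+1) →₀ ℕ)) (ω : ℕ) : Matrix A A ℝ :=
  fun a b =>
    if (a : Fin (n+1) →₀ ℕ) = Finsupp.single 0 ω ∧ (b : Fin (n+1) →₀ ℕ) = Finsupp.single 0 ω
    then 1 else 0

/-- `J_p = { X ∈ CPP^A : ⟨Q^i, X⟩ = 0 (i = 1,…,p) }`. -/
def Jset (A : Finset (Fin (n+1) →₀ ℕ)) (Q : ℕ → Matrix A A ℝ) (p : ℕ) :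
    Set (Matrix A A ℝ) :=
  { X ∈ CPPA A | ∀ i, 1 ≤ i → i ≤ p → ip (Q i) X = 0 }

/-- `S̄_p = { x ∈ ℝ^{1+n}_+ : f̄_i(x) = 0 (i = 1,…,p) }`. -/
def Sbar (fb : ℕ → MvPolynomial (Fin (n+1)) ℝ) (p : ℕ) : Set (Fin (n+1) → ℝ) :=
  { x | (∀ j, 0 ≤ x j) ∧ ∀ i, 1 ≤ i → i ≤ p → eval x (fb i) = 0 }

/-- `S̃_p = { w ∈ ℝ^n_+ : f̄_i(0, w) = 0 (i = 1,…,p) }`. -/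
def Stilde (fb : ℕ → MvPolynomial (Fin (n+1)) ℝ) (p : ℕ) : Set (Fin n → ℝ) :=
  { w | (∀ j, 0 ≤ w j) ∧ ∀ i, 1 ≤ i → i ≤ p → eval (Fin.cons 0 w) (fb i) = 0 }

/-- `S_p = { w ∈ ℝ^n_+ : f_i(w) = 0 (i = 1,…,p) }`. -/
def Sset (f : ℕ → MvPolynomial (Fin n) ℝ) (p : ℕ) : Set (Fin n → ℝ) :=
  { w | (∀ j, 0 ≤ w j) ∧ ∀ i, 1 ≤ i → i ≤ p → eval w (f i) = 0 }

/-- Infimum of a set of reals, taken in the extended reals. -/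
def erInf (s : Set ℝ) : EReal := sInf ((fun r : ℝ => (r : EReal)) '' s)

/-- `F` is a face of the convex set `C`. -/
def IsFace {V : Type*} [AddCommGroup V] [Module ℝ V] (C F : Set V) : Prop :=
  F ⊆ C ∧ Convex ℝ F ∧
    ∀ y ∈ C, ∀ z ∈ C, ∀ t : ℝ, 0 < t → t < 1 → (1 - t) • y + t • z ∈ F → y ∈ F ∧ z ∈ F

theorem ip_H0_momMat {n ω : ℕ} (A : Finset (Fin (n+1) →₀ ℕ))
    (hAtop : Finsupp.single (0 : Fin (n+1)) ω ∈ A) (x : Fin (n+1) → ℝ) :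
    ip (H0mat A ω) (momMat A x) = (x 0 ^ ω) * (x 0 ^ ω) := by
  have hu : uA A x ⟨_, hAtop⟩ = x 0 ^ ω := by
    unfold uA
    rw [Finset.prod_eq_single 0]
    · simp
    · intro b _ hb
      simp [Finsupp.single_apply, hb.symm]
    · simp
  unfold ip
  rw [Finset.sum_eq_single ⟨_, hAtop⟩, Finset.sum_eq_single ⟨_, hAtop⟩]
  · simp [H0mat, momMat, hu]
  · intro b _ hb
    have : (b : Fin (n+1) →₀ ℕ) ≠ Finsupp.single 0 ω := fun h => hb (Subtype.ext h)
    simp [H0mat, this]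
  · simp
  · intro b _ hb
    have : (b : Fin (n+1) →₀ ℕ) ≠ Finsupp.single 0 ω := fun h => hb (Subtype.ext h)
    simp [H0mat, this]
  · simp

theorem stmt8
    (n ω m : ℕ) (hn : 0 < n) (hω : 0 < ω) (hm : 0 < m)
    (A : Finset (Fin (n+1) →₀ ℕ)) (hA : A.Nonempty)
    (hAdeg : ∀ α ∈ A, ∑ i, α i = ω)
    (hAtop : Finsupp.single (0 : Fin (n+1)) ω ∈ A)
    (f : ℕ → MvPolynomial (Fin n) ℝ)
    (fb : ℕ → MvPolynomial (Fin (n+1)) ℝ)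
    (hfdeg : ∀ i ≤ m, (f i).totalDegree ≤ 2 * ω)
    (hfbhom : ∀ i ≤ m, (fb i).IsHomogeneous (2 * ω))
    (hfb1 : ∀ i ≤ m, ∀ w : Fin n → ℝ, eval (Fin.cons 1 w) (fb i) = eval w (f i))
    (Q : ℕ → Matrix A A ℝ)
    (hQsymm : ∀ i ≤ m, (Q i).IsSymm)
    (hQrep : ∀ i ≤ m, ∀ x : Fin (n+1) → ℝ, eval x (fb i) = ip (Q i) (momMat A x))
    :
    ({ y : ℝ | ∃ w : Fin n → ℝ, (∀ j, 0 ≤ w j) ∧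
          (∀ i, 1 ≤ i → i ≤ m → eval w (f i) = 0) ∧ y = eval w (f 0) }
        = { y : ℝ | ∃ X ∈ GammaA A, (∀ i, 1 ≤ i → i ≤ m → ip (Q i) X = 0) ∧
            ip (H0mat A ω) X = 1 ∧ y = ip (Q 0) X }) ∧
    erInf { y : ℝ | ∃ w : Fin n → ℝ, (∀ j, 0 ≤ w j) ∧
          (∀ i, 1 ≤ i → i ≤ m → eval w (f i) = 0) ∧ y = eval w (f 0) }
      = erInf { y : ℝ | ∃ X ∈ GammaA A ∩ Jset A Q m,
          ip (H0mat A ω) X = 1 ∧ y = ip (Q 0) X } := by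
  have key : { y : ℝ | ∃ w : Fin n → ℝ, (∀ j, 0 ≤ w j) ∧
          (∀ i, 1 ≤ i → i ≤ m → eval w (f i) = 0) ∧ y = eval w (f 0) }
        = { y : ℝ | ∃ X ∈ GammaA A, (∀ i, 1 ≤ i → i ≤ m → ip (Q i) X = 0) ∧
            ip (H0mat A ω) X = 1 ∧ y = ip (Q 0) X } := by
    ext y
    constructor
    · rintro ⟨w, hw, hf, rfl⟩
      refine ⟨momMat A (Fin.cons 1 w), ⟨Fin.cons 1 w, ?_, rfl⟩, ?_, ?_, ?_⟩
      · intro i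
        refine Fin.cases ?_ (fun j => ?_) i
        · simp
        · simpa using hw j
      · intro i h1 h2
        rw [← hQrep i h2, hfb1 i h2, hf i h1 h2]
      · rw [ip_H0_momMat A hAtop]
        simp
      · rw [← hQrep 0 (Nat.zero_le _), hfb1 0 (Nat.zero_le _)]
    · rintro ⟨X, ⟨x, hx, rfl⟩, hQ, hH, rfl⟩
      rw [ip_H0_momMat A hAtop, ← pow_add] at hH
      have hx0 : x 0 = 1 := (pow_eq_one_iff_of_nonneg (hx 0) (by omega)).1 hH
      have hc : (Fin.cons 1 (Fin.tail x) : Fin (n+1) → ℝ) = x := by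
        rw [← hx0]
        exact Fin.cons_self_tail x
      refine ⟨Fin.tail x, fun j => hx j.succ, ?_, ?_⟩
      · intro i h1 h2
        rw [← hfb1 i h2, hc, hQrep i h2, hQ i h1 h2]
      · rw [← hfb1 0 (Nat.zero_le _), hc, hQrep 0 (Nat.zero_le _)]
  refine ⟨key, ?_⟩
  rw [key]
  congr 1
  ext y
  constructor
  · rintro ⟨X, hX, hQ, h⟩
    exact ⟨X, ⟨hX, subset_convexHull ℝ _ hX, hQ⟩, h⟩
  · rintro ⟨X, ⟨hX, _, hQ⟩, h⟩
    exact ⟨X, hX, hQ, h⟩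
end
end

section
/- (Lemma 5.1(ii)) For every p ∈ {1,…,m}: { ⟨Q^p, X⟩ : X ∈ Γ^A, ⟨Q^i, X⟩ = 0 (i = 1,…,p−1), ⟨H^0, X⟩ = 0 } = { f̄_p(0, w) : w ∈ S̃_{p−1} }. In particular ζ(Γ^A ∩ J_{p−1}, Q^p, 0) := inf{ ⟨Q^p, X⟩ : X ∈ Γ^A ∩ J_{p−1}, ⟨H^0, X⟩ = 0 } equals inf{ f̄_p(0, w) : w ∈ S̃_{p−1} } (infima in the extended reals). -/
open MvPolynomial

noncomputable section

open scoped Classical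

variable {n : ℕ}

theorem ip_H0mat_momMat (A : Finset (Fin (n+1) →₀ ℕ)) (ω : ℕ)
    (hAtop : Finsupp.single (0 : Fin (n+1)) ω ∈ A) (x : Fin (n+1) → ℝ) :
    ip (H0mat A ω) (momMat A x) = (x 0 ^ ω) * (x 0 ^ ω) := by
  have hu : uA A x ⟨_, hAtop⟩ = x 0 ^ ω := by
    unfold uA
    rw [Finset.prod_eq_single (0 : Fin (n+1))]
    · simp
    · intro b _ hb
      simp [Finsupp.single_apply, hb.symm]
    · simp
  unfold ip
  rw [Finset.sum_eq_single (⟨_, hAtop⟩ : A), Finset.sum_eq_single (⟨_, hAtop⟩ : A)]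
  · simp [H0mat, momMat, hu]
  · intro b _ hb
    have : (b : Fin (n+1) →₀ ℕ) ≠ Finsupp.single 0 ω := fun h => hb (Subtype.ext h)
    simp [H0mat, this]
  · simp
  · intro b _ hb
    have : (b : Fin (n+1) →₀ ℕ) ≠ Finsupp.single 0 ω := fun h => hb (Subtype.ext h)
    simp [H0mat, this]
  · simp

theorem stmt10
    (n ω m : ℕ) (hn : 0 < n) (hω : 0 < ω) (hm : 0 < m)
    (A : Finset (Fin (n+1) →₀ ℕ)) (hA : A.Nonempty)
    (hAdeg : ∀ α ∈ A, ∑ i, α i = ω)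
    (hAtop : Finsupp.single (0 : Fin (n+1)) ω ∈ A)
    (f : ℕ → MvPolynomial (Fin n) ℝ)
    (fb : ℕ → MvPolynomial (Fin (n+1)) ℝ)
    (hfdeg : ∀ i ≤ m, (f i).totalDegree ≤ 2 * ω)
    (hfbhom : ∀ i ≤ m, (fb i).IsHomogeneous (2 * ω))
    (hfb1 : ∀ i ≤ m, ∀ w : Fin n → ℝ, eval (Fin.cons 1 w) (fb i) = eval w (f i))
    (Q : ℕ → Matrix A A ℝ)
    (hQsymm : ∀ i ≤ m, (Q i).IsSymm)
    (hQrep : ∀ i ≤ m, ∀ x : Fin (n+1) → ℝ, eval x (fb i) = ip (Q i) (momMat A x))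
    :
    ∀ p, 1 ≤ p → p ≤ m →
      ({ y : ℝ | ∃ X ∈ GammaA A, (∀ i, 1 ≤ i → i < p → ip (Q i) X = 0) ∧
            ip (H0mat A ω) X = 0 ∧ y = ip (Q p) X }
          = { y : ℝ | ∃ w ∈ Stilde fb (p - 1), y = eval (Fin.cons 0 w) (fb p) }) ∧
      erInf { y : ℝ | ∃ X ∈ GammaA A ∩ Jset A Q (p - 1),
            ip (H0mat A ω) X = 0 ∧ y = ip (Q p) X }
        = erInf { y : ℝ | ∃ w ∈ Stilde fb (p - 1), y = eval (Fin.cons 0 w) (fb p) } := by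
  intro p hp1 hpm
  have key : { y : ℝ | ∃ X ∈ GammaA A, (∀ i, 1 ≤ i → i < p → ip (Q i) X = 0) ∧
            ip (H0mat A ω) X = 0 ∧ y = ip (Q p) X }
          = { y : ℝ | ∃ w ∈ Stilde fb (p - 1), y = eval (Fin.cons 0 w) (fb p) } := by
    ext y
    constructor
    · rintro ⟨X, ⟨x, hx, rfl⟩, hQ, hH, rfl⟩
      rw [ip_H0mat_momMat A ω hAtop] at hH
      have hx0 : x 0 = 0 := by
        have := mul_self_eq_zero.mp hH
        exact pow_eq_zero_iff (by omega) |>.mp this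
      have hc : (Fin.cons 0 (Fin.tail x) : Fin (n+1) → ℝ) = x := by
        rw [← hx0]; exact Fin.cons_self_tail x
      refine ⟨Fin.tail x, ⟨fun j => hx _, fun i hi1 hi2 => ?_⟩, ?_⟩
      · rw [hc, hQrep i (by omega)]
        exact hQ i hi1 (by omega)
      · rw [hc, hQrep p hpm]
    · rintro ⟨w, ⟨hw, hf⟩, rfl⟩
      refine ⟨momMat A (Fin.cons 0 w), ⟨Fin.cons 0 w, ?_, rfl⟩, fun i hi1 hi2 => ?_, ?_, ?_⟩
      · intro i
        refine Fin.cases ?_ (fun j => ?_) i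
        · simp
        · simpa using hw j
      · rw [← hQrep i (by omega)]
        exact hf i hi1 (by omega)
      · rw [ip_H0mat_momMat A ω hAtop]
        simp [hω.ne']
      · exact hQrep p hpm _
  refine ⟨key, ?_⟩
  rw [← key]
  congr 1
  ext y
  constructor
  · rintro ⟨X, ⟨hX, _, hJ⟩, hH, hy⟩
    exact ⟨X, hX, fun i h1 h2 => hJ i h1 (by omega), hH, hy⟩
  · rintro ⟨X, hX, hJ, hH, hy⟩
    exact ⟨X, ⟨hX, subset_convexHull ℝ _ hX, fun i h1 h2 => hJ i h1 (by omega)⟩, hH, hy⟩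
end
end

section
/- (Lemma 5.1(iv)) { ⟨Q^0, X⟩ : X ∈ Γ^A, ⟨Q^i, X⟩ = 0 (i = 1,…,m), ⟨H^0, X⟩ = 0 } = { f̄_0(0, w) : w ∈ S̃_m }. In particular ζ(Γ^A ∩ J_m, Q^0, 0) := inf{ ⟨Q^0, X⟩ : X ∈ Γ^A ∩ J_m, ⟨H^0, X⟩ = 0 } equals inf{ f̄_0(0, w) : w ∈ S̃_m } (infima in the extended reals). -/
open MvPolynomial

noncomputable section

open scoped Classical

variable {n : ℕ}

theorem uA_top {n : ℕ} (A : Finset (Fin (n+1) →₀ ℕ)) (ω : ℕ)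
    (h : Finsupp.single (0 : Fin (n+1)) ω ∈ A) (x : Fin (n+1) → ℝ) :
    uA A x ⟨_, h⟩ = x 0 ^ ω := by
  unfold uA
  rw [Finset.prod_eq_single (0 : Fin (n+1))]
  · simp
  · intro b _ hb
    simp [Finsupp.single_apply, Ne.symm hb]
  · simp

theorem ip_H0 {n : ℕ} (A : Finset (Fin (n+1) →₀ ℕ)) (ω : ℕ)
    (h : Finsupp.single (0 : Fin (n+1)) ω ∈ A) (x : Fin (n+1) → ℝ) :
    ip (H0mat A ω) (momMat A x) = x 0 ^ ω * x 0 ^ ω := by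
  unfold ip
  rw [Finset.sum_eq_single (⟨_, h⟩ : A), Finset.sum_eq_single (⟨_, h⟩ : A)]
  · simp [H0mat, momMat, uA_top]
  · intro b _ hb
    have hb' : (b : Fin (n+1) →₀ ℕ) ≠ Finsupp.single 0 ω := fun e => hb (Subtype.ext e)
    simp [H0mat, hb']
  · simp
  · intro b _ hb
    have hb' : (b : Fin (n+1) →₀ ℕ) ≠ Finsupp.single 0 ω := fun e => hb (Subtype.ext e)
    simp [H0mat, hb']
  · simp

theorem stmt12
    (n ω m : ℕ) (hn : 0 < n) (hω : 0 < ω) (hm : 0 < m)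
    (A : Finset (Fin (n+1) →₀ ℕ)) (hA : A.Nonempty)
    (hAdeg : ∀ α ∈ A, ∑ i, α i = ω)
    (hAtop : Finsupp.single (0 : Fin (n+1)) ω ∈ A)
    (f : ℕ → MvPolynomial (Fin n) ℝ)
    (fb : ℕ → MvPolynomial (Fin (n+1)) ℝ)
    (hfdeg : ∀ i ≤ m, (f i).totalDegree ≤ 2 * ω)
    (hfbhom : ∀ i ≤ m, (fb i).IsHomogeneous (2 * ω))
    (hfb1 : ∀ i ≤ m, ∀ w : Fin n → ℝ, eval (Fin.cons 1 w) (fb i) = eval w (f i))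
    (Q : ℕ → Matrix A A ℝ)
    (hQsymm : ∀ i ≤ m, (Q i).IsSymm)
    (hQrep : ∀ i ≤ m, ∀ x : Fin (n+1) → ℝ, eval x (fb i) = ip (Q i) (momMat A x))
    :
    ({ y : ℝ | ∃ X ∈ GammaA A, (∀ i, 1 ≤ i → i ≤ m → ip (Q i) X = 0) ∧
          ip (H0mat A ω) X = 0 ∧ y = ip (Q 0) X }
        = { y : ℝ | ∃ w ∈ Stilde fb m, y = eval (Fin.cons 0 w) (fb 0) }) ∧
    erInf { y : ℝ | ∃ X ∈ GammaA A ∩ Jset A Q m,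
          ip (H0mat A ω) X = 0 ∧ y = ip (Q 0) X }
      = erInf { y : ℝ | ∃ w ∈ Stilde fb m, y = eval (Fin.cons 0 w) (fb 0) } := by
  have key : { y : ℝ | ∃ X ∈ GammaA A, (∀ i, 1 ≤ i → i ≤ m → ip (Q i) X = 0) ∧
          ip (H0mat A ω) X = 0 ∧ y = ip (Q 0) X }
        = { y : ℝ | ∃ w ∈ Stilde fb m, y = eval (Fin.cons 0 w) (fb 0) } := by
    ext y
    constructor
    · rintro ⟨X, ⟨x, hx, rfl⟩, hQ, hH, rfl⟩
      rw [ip_H0 A ω hAtop] at hH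
      have h0 : x 0 = 0 := by
        rcases mul_eq_zero.mp hH with h | h <;> exact pow_eq_zero_iff hω.ne' |>.mp h
      have hc : (Fin.cons 0 (fun j : Fin n => x j.succ) : Fin (n+1) → ℝ) = x := by
        funext j
        refine Fin.cases ?_ (fun j => ?_) j
        · simp [h0]
        · simp
      refine ⟨fun j => x j.succ, ⟨fun j => hx _, fun i h1 h2 => ?_⟩, ?_⟩
      · rw [hc, hQrep i h2]
        exact hQ i h1 h2
      · rw [hc, hQrep 0 (Nat.zero_le _)]
    · rintro ⟨w, ⟨hw, hf⟩, rfl⟩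
      refine ⟨momMat A (Fin.cons 0 w), ⟨_, fun i => ?_, rfl⟩, fun i h1 h2 => ?_, ?_, ?_⟩
      · refine Fin.cases ?_ (fun j => ?_) i
        · simp
        · simpa using hw j
      · rw [← hQrep i h2]
        exact hf i h1 h2
      · rw [ip_H0 A ω hAtop]
        simp [hω.ne']
      · rw [hQrep 0 (Nat.zero_le _)]
  refine ⟨key, ?_⟩
  rw [← key]
  congr 1
  ext y
  constructor
  · rintro ⟨X, ⟨hX, _, hQ⟩, h⟩
    exact ⟨X, hX, hQ, h⟩
  · rintro ⟨X, hX, hQ, h⟩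
    exact ⟨X, ⟨hX, subset_convexHull ℝ _ hX, hQ⟩, h⟩
end
end

section
/- (Theorem 5.1(i)) Let p ∈ {1,…,m}. Assume that J_{p−1} is a face of CPP^A, and that f̄_p(x) ≥ 0 for every x ∈ S̄_{p−1}. Then J_p is a face of J_{p−1} and a face of CPP^A. -/
open MvPolynomial

noncomputable section

open scoped Classical

variable {n : ℕ}

theorem ip_comb {n : ℕ} {A : Finset (Fin (n+1) →₀ ℕ)} (P X Y : Matrix A A ℝ) (a b : ℝ) :
    ip P (a • X + b • Y) = a * ip P X + b * ip P Y := by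
  simp only [ip, Matrix.add_apply, Matrix.smul_apply, smul_eq_mul, Finset.mul_sum,
    ← Finset.sum_add_distrib]
  refine Finset.sum_congr rfl fun i _ => Finset.sum_congr rfl fun j _ => ?_
  ring

theorem Jset_convex {n : ℕ} (A : Finset (Fin (n+1) →₀ ℕ)) (Q : ℕ → Matrix A A ℝ) (p : ℕ) :
    Convex ℝ (Jset A Q p) := by
  intro x hx y hy a b ha hb hab
  refine ⟨convex_convexHull ℝ _ hx.1 hy.1 ha hb hab, fun i h1 h2 => ?_⟩
  rw [ip_comb, hx.2 i h1 h2, hy.2 i h1 h2]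
  simp

theorem stmt13
    (n ω m : ℕ) (hn : 0 < n) (hω : 0 < ω) (hm : 0 < m)
    (A : Finset (Fin (n+1) →₀ ℕ)) (hA : A.Nonempty)
    (hAdeg : ∀ α ∈ A, ∑ i, α i = ω)
    (hAtop : Finsupp.single (0 : Fin (n+1)) ω ∈ A)
    (f : ℕ → MvPolynomial (Fin n) ℝ)
    (fb : ℕ → MvPolynomial (Fin (n+1)) ℝ)
    (hfdeg : ∀ i ≤ m, (f i).totalDegree ≤ 2 * ω)
    (hfbhom : ∀ i ≤ m, (fb i).IsHomogeneous (2 * ω))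
    (hfb1 : ∀ i ≤ m, ∀ w : Fin n → ℝ, eval (Fin.cons 1 w) (fb i) = eval w (f i))
    (Q : ℕ → Matrix A A ℝ)
    (hQsymm : ∀ i ≤ m, (Q i).IsSymm)
    (hQrep : ∀ i ≤ m, ∀ x : Fin (n+1) → ℝ, eval x (fb i) = ip (Q i) (momMat A x))
    (p : ℕ) (hp1 : 1 ≤ p) (hpm : p ≤ m)
    (hface : IsFace (CPPA A) (Jset A Q (p - 1)))
    (hpos : ∀ x ∈ Sbar fb (p - 1), 0 ≤ eval x (fb p)) :
    IsFace (Jset A Q (p - 1)) (Jset A Q p) ∧ IsFace (CPPA A) (Jset A Q p) := by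
  have key : CPPA A ⊆ {X | X ∈ CPPA A ∧ (X ∈ Jset A Q (p - 1) → 0 ≤ ip (Q p) X)} := by
    refine convexHull_min ?_ ?_
    · rintro X hX
      refine ⟨subset_convexHull ℝ _ hX, fun hJ => ?_⟩
      obtain ⟨x, hx, rfl⟩ := hX
      rw [← hQrep p hpm]
      refine hpos x ⟨hx, fun i h1 h2 => ?_⟩
      rw [hQrep i (by omega)]
      exact hJ.2 i h1 h2
    · intro x hx y hy a b ha hb hab
      refine ⟨convex_convexHull ℝ _ hx.1 hy.1 ha hb hab, fun hJ => ?_⟩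
      have ha' : a = 1 - b := by linarith
      subst ha'
      rcases hb.eq_or_lt with rfl | hb
      · simp only [sub_zero, one_smul, zero_smul, add_zero] at hJ ⊢
        exact hx.2 hJ
      rcases ha.eq_or_lt with h0 | ha
      · have hb1 : b = 1 := by linarith
        subst hb1
        simp only [sub_self, one_smul, zero_smul, zero_add] at hJ ⊢
        exact hy.2 hJ
      obtain ⟨h1, h2⟩ := hface.2.2 x hx.1 y hy.1 b hb (by linarith) hJ
      rw [ip_comb]
      have := hx.2 h1
      have := hy.2 h2
      positivity
  have hsub : Jset A Q p ⊆ Jset A Q (p - 1) :=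
    fun X hX => ⟨hX.1, fun i h1 h2 => hX.2 i h1 (by omega)⟩
  have hmem : ∀ X ∈ Jset A Q (p - 1), ip (Q p) X = 0 → X ∈ Jset A Q p := by
    intro X hX h0
    refine ⟨hX.1, fun i h1 h2 => ?_⟩
    rcases h2.eq_or_lt with rfl | h2
    · exact h0
    · exact hX.2 i h1 (by omega)
  have hF : ∀ y ∈ Jset A Q (p - 1), ∀ z ∈ Jset A Q (p - 1), ∀ t : ℝ, 0 < t → t < 1 →
      (1 - t) • y + t • z ∈ Jset A Q p → y ∈ Jset A Q p ∧ z ∈ Jset A Q p := by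
    intro y hy z hz t ht0 ht1 h
    have e := h.2 p hp1 le_rfl
    rw [ip_comb] at e
    have h1 := (key hy.1).2 hy
    have h2 := (key hz.1).2 hz
    have h3 : 0 < 1 - t := by linarith
    have h4 := mul_nonneg h3.le h1
    have h5 := mul_nonneg ht0.le h2
    have h6 : (1 - t) * ip (Q p) y = 0 := by linarith
    have h7 : t * ip (Q p) z = 0 := by linarith
    exact ⟨hmem y hy ((mul_eq_zero.mp h6).resolve_left h3.ne'),
      hmem z hz ((mul_eq_zero.mp h7).resolve_left ht0.ne')⟩
  refine ⟨⟨hsub, Jset_convex A Q p, hF⟩, fun X hX => hX.1, Jset_convex A Q p, ?_⟩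
  intro y hy z hz t ht0 ht1 h
  obtain ⟨h1, h2⟩ := hface.2.2 y hy z hz t ht0 ht1 (hsub h)
  exact hF y h1 z h2 t ht0 ht1 h
end
end

section
/- (Theorem 5.2) Assume that the POP is feasible, i.e., S_m ≠ ∅, and that J = J_m is a face of CPP^A. Let ζ* := inf{ f_0(w) : w ∈ S_m } and ζ(J, Q^0) := inf{ ⟨Q^0, X⟩ : X ∈ J, ⟨H^0, X⟩ = 1 }, both infima taken in the extended reals. Then ζ* = ζ(J, Q^0) if and only if either f̄_0(0, w) ≥ 0 for every w ∈ S̃_m, or ζ* = −∞. -/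
open MvPolynomial

noncomputable section

open scoped Classical

variable {n : ℕ}

theorem aux_ip_smul {n : ℕ} {A : Finset (Fin (n+1) →₀ ℕ)} (P X : Matrix A A ℝ) (c : ℝ) :
    ip P (c • X) = c * ip P X := by
  unfold ip
  simp only [Finset.mul_sum, Matrix.smul_apply, smul_eq_mul]
  refine Finset.sum_congr rfl fun a _ => Finset.sum_congr rfl fun b _ => ?_
  ring

theorem aux_ip_add {n : ℕ} {A : Finset (Fin (n+1) →₀ ℕ)} (P X Y : Matrix A A ℝ) :
    ip P (X + Y) = ip P X + ip P Y := by
  unfold ip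
  simp only [← Finset.sum_add_distrib, Matrix.add_apply, mul_add]

theorem aux_mom_smul {n ω : ℕ} {A : Finset (Fin (n+1) →₀ ℕ)}
    (hAdeg : ∀ α ∈ A, ∑ i, α i = ω) (s : ℝ) (x : Fin (n+1) → ℝ) :
    momMat A (s • x) = s ^ (2 * ω) • momMat A x := by
  have h : ∀ a : A, uA A (s • x) a = s ^ ω * uA A x a := by
    intro a
    unfold uA
    simp only [Pi.smul_apply, smul_eq_mul, mul_pow, Finset.prod_mul_distrib]
    rw [Finset.prod_pow_eq_pow_sum, hAdeg a a.2]
  ext a b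
  simp only [momMat, h, Matrix.smul_apply, smul_eq_mul]
  ring

theorem aux_H0 {n ω : ℕ} {A : Finset (Fin (n+1) →₀ ℕ)}
    (hAtop : Finsupp.single (0 : Fin (n+1)) ω ∈ A) (x : Fin (n+1) → ℝ) :
    ip (H0mat A ω) (momMat A x) = x 0 ^ (2 * ω) := by
  have hu : uA A x ⟨_, hAtop⟩ = x 0 ^ ω := by
    unfold uA
    rw [Finset.prod_eq_single 0]
    · simp
    · intro b _ hb
      simp [Finsupp.single_apply, hb.symm]
    · simp
  unfold ip
  rw [Finset.sum_eq_single ⟨_, hAtop⟩, Finset.sum_eq_single ⟨_, hAtop⟩]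
  · simp only [H0mat, momMat, hu, and_self, if_true]
    ring
  · intro b _ hb
    have : (b : Fin (n+1) →₀ ℕ) ≠ Finsupp.single 0 ω := fun h => hb (Subtype.ext h)
    simp [H0mat, this]
  · simp
  · intro b _ hb
    have : (b : Fin (n+1) →₀ ℕ) ≠ Finsupp.single 0 ω := fun h => hb (Subtype.ext h)
    simp [H0mat, this]
  · simp

theorem stmt15
    (n ω m : ℕ) (hn : 0 < n) (hω : 0 < ω) (hm : 0 < m)
    (A : Finset (Fin (n+1) →₀ ℕ)) (hA : A.Nonempty)
    (hAdeg : ∀ α ∈ A, ∑ i, α i = ω)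
    (hAtop : Finsupp.single (0 : Fin (n+1)) ω ∈ A)
    (f : ℕ → MvPolynomial (Fin n) ℝ)
    (fb : ℕ → MvPolynomial (Fin (n+1)) ℝ)
    (hfdeg : ∀ i ≤ m, (f i).totalDegree ≤ 2 * ω)
    (hfbhom : ∀ i ≤ m, (fb i).IsHomogeneous (2 * ω))
    (hfb1 : ∀ i ≤ m, ∀ w : Fin n → ℝ, eval (Fin.cons 1 w) (fb i) = eval w (f i))
    (Q : ℕ → Matrix A A ℝ)
    (hQsymm : ∀ i ≤ m, (Q i).IsSymm)
    (hQrep : ∀ i ≤ m, ∀ x : Fin (n+1) → ℝ, eval x (fb i) = ip (Q i) (momMat A x))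
    (hfeas : (Sset f m).Nonempty)
    (hface : IsFace (CPPA A) (Jset A Q m)) :
    erInf { y : ℝ | ∃ w ∈ Sset f m, y = eval w (f 0) }
        = erInf { y : ℝ | ∃ X ∈ Jset A Q m, ip (H0mat A ω) X = 1 ∧ y = ip (Q 0) X }
      ↔ ((∀ w ∈ Stilde fb m, 0 ≤ eval (Fin.cons 0 w) (fb 0)) ∨
          erInf { y : ℝ | ∃ w ∈ Sset f m, y = eval w (f 0) } = ⊥) := by
  have hmemCPP : ∀ x : Fin (n+1) → ℝ, (∀ i, 0 ≤ x i) → momMat A x ∈ CPPA A :=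
    fun x hx => subset_convexHull ℝ _ ⟨x, hx, rfl⟩
  have hcons : ∀ (a : ℝ) (w : Fin n → ℝ), 0 ≤ a → (∀ j, 0 ≤ w j) →
      ∀ i, 0 ≤ (Fin.cons a w : Fin (n+1) → ℝ) i := by
    intro a w ha hw i
    refine Fin.cases ?_ (fun j => ?_) i
    · simpa using ha
    · simpa using hw j
  have hle : erInf { y : ℝ | ∃ X ∈ Jset A Q m, ip (H0mat A ω) X = 1 ∧ y = ip (Q 0) X }
      ≤ erInf { y : ℝ | ∃ w ∈ Sset f m, y = eval w (f 0) } := by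
    unfold erInf
    apply sInf_le_sInf
    apply Set.image_mono
    rintro y ⟨w, hw, rfl⟩
    refine ⟨momMat A (Fin.cons 1 w), ⟨hmemCPP _ (hcons 1 w zero_le_one hw.1), ?_⟩, ?_, ?_⟩
    · intro i h1 h2
      rw [← hQrep i h2, hfb1 i h2, hw.2 i h1 h2]
    · rw [aux_H0 hAtop]; simp
    · rw [← hQrep 0 (Nat.zero_le _), hfb1 0 (Nat.zero_le _)]
  constructor
  · intro heq
    by_contra hcon
    push Not at hcon
    obtain ⟨⟨w, hw, hneg⟩, hbot⟩ := hcon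
    apply hbot
    rw [heq]
    obtain ⟨w0, hw0⟩ := hfeas
    set d := eval (Fin.cons 0 w) (fb 0) with hd
    have ht0 : (0:ℝ) < (2:ℝ) ^ (2 * ω) := by positivity
    have ht1 : (1:ℝ) < (2:ℝ) ^ (2 * ω) := one_lt_pow₀ (by norm_num) (by omega)
    set t : ℝ := ((2:ℝ) ^ (2 * ω))⁻¹ with ht
    have htpos : 0 < t := by positivity
    have htlt : t < 1 := inv_lt_one_of_one_lt₀ ht1
    have htt : t * (2:ℝ) ^ (2 * ω) = 1 := inv_mul_cancel₀ ht0.ne'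
    have key : ∀ k : ℕ, ∃ X ∈ Jset A Q m, ip (H0mat A ω) X = 1 ∧
        ip (Q 0) X = eval w0 (f 0) + (1 - t) * ((k:ℝ) ^ (2 * ω) * d) := by
      intro k
      have hgen : ∀ P : Matrix A A ℝ,
          ip P (t • momMat A ((2:ℝ) • Fin.cons 1 w0) + (1 - t) • momMat A ((k:ℝ) • Fin.cons 0 w))
          = ip P (momMat A (Fin.cons 1 w0))
            + (1 - t) * ((k:ℝ) ^ (2 * ω) * ip P (momMat A (Fin.cons 0 w))) := by
        intro P
        rw [aux_ip_add, aux_ip_smul, aux_ip_smul, aux_mom_smul hAdeg, aux_mom_smul hAdeg,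
          aux_ip_smul, aux_ip_smul, ← mul_assoc, htt, one_mul]
      refine ⟨_, ⟨?_, ?_⟩, (hgen _).trans ?_, (hgen _).trans ?_⟩
      · refine (convex_convexHull ℝ _) (hmemCPP _ ?_) (hmemCPP _ ?_) htpos.le (by linarith) (by ring)
        · intro i
          exact mul_nonneg (by norm_num) (hcons 1 w0 zero_le_one hw0.1 i)
        · intro i
          exact mul_nonneg (Nat.cast_nonneg _) (hcons 0 w le_rfl hw.1 i)
      · intro i h1 h2
        rw [hgen, ← hQrep i h2, ← hQrep i h2, hfb1 i h2, hw0.2 i h1 h2, hw.2 i h1 h2]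
        simp
      · rw [aux_H0 hAtop, aux_H0 hAtop]
        have : 2 * ω ≠ 0 := by omega
        simp [this]
      · rw [← hQrep 0 (Nat.zero_le _), ← hQrep 0 (Nat.zero_le _), hfb1 0 (Nat.zero_le _)]
    rw [EReal.eq_bot_iff_forall_lt]
    intro y
    have hc : 0 < (1 - t) * (-d) := mul_pos (by linarith) (by linarith)
    obtain ⟨k, hk⟩ := exists_nat_gt (max 1 ((eval w0 (f 0) - y) / ((1 - t) * (-d))))
    have hk1 : (1:ℝ) ≤ k := (le_max_left _ _).trans hk.le
    have hk2 := lt_of_le_of_lt (le_max_right _ _) hk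
    rw [div_lt_iff₀ hc] at hk2
    have hk3 : (k:ℝ) ≤ (k:ℝ) ^ (2 * ω) := le_self_pow₀ hk1 (by omega)
    obtain ⟨X, hX, hX1, hX2⟩ := key k
    refine lt_of_le_of_lt (sInf_le ⟨ip (Q 0) X, ⟨X, hX, hX1, rfl⟩, rfl⟩) ?_
    refine EReal.coe_lt_coe_iff.mpr ?_
    have := mul_le_mul_of_nonneg_right hk3 hc.le
    rw [hX2]
    nlinarith
  · intro h
    by_cases hbot : erInf { y : ℝ | ∃ w ∈ Sset f m, y = eval w (f 0) } = ⊥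
    · rw [hbot] at hle ⊢
      exact (le_bot_iff.mp hle).symm
    have h0 := h.resolve_right hbot
    refine le_antisymm ?_ hle
    have htop : erInf { y : ℝ | ∃ w ∈ Sset f m, y = eval w (f 0) } ≠ ⊤ := by
      obtain ⟨w0, hw0⟩ := hfeas
      exact ne_top_of_le_ne_top (EReal.coe_ne_top (eval w0 (f 0)))
        (sInf_le ⟨eval w0 (f 0), ⟨w0, hw0, rfl⟩, rfl⟩)
    obtain ⟨c, hc⟩ : ∃ c : ℝ, erInf { y : ℝ | ∃ w ∈ Sset f m, y = eval w (f 0) } = (c : EReal) :=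
      ⟨_, (EReal.coe_toReal htop hbot).symm⟩
    have hcle : ∀ w ∈ Sset f m, c ≤ eval w (f 0) := by
      intro w hw
      rw [← EReal.coe_le_coe_iff, ← hc]
      exact sInf_le ⟨_, ⟨w, hw, rfl⟩, rfl⟩
    have main : CPPA A ⊆ { X | X ∈ CPPA A ∧
        (X ∈ Jset A Q m → c * ip (H0mat A ω) X ≤ ip (Q 0) X) } := by
      apply convexHull_min
      · rintro X ⟨x, hx, rfl⟩
        refine ⟨hmemCPP x hx, fun hJ => ?_⟩
        rw [aux_H0 hAtop]
        rcases (hx 0).eq_or_lt with hx0 | hx0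
        · have hxe : x = Fin.cons 0 (Fin.tail x) := by
            rw [hx0]; exact (Fin.cons_self_tail x).symm
          have hmem : Fin.tail x ∈ Stilde fb m := by
            refine ⟨fun j => hx j.succ, fun i h1 h2 => ?_⟩
            rw [← hxe, hQrep i h2]
            exact hJ.2 i h1 h2
          have := h0 _ hmem
          rw [← hxe, hQrep 0 (Nat.zero_le _)] at this
          have h2 : 2 * ω ≠ 0 := by omega
          rw [← hx0, zero_pow h2, mul_zero]
          exact this
        · set w : Fin n → ℝ := fun j => x j.succ / x 0 with hwdef
          have hxe : x = x 0 • (Fin.cons 1 w : Fin (n+1) → ℝ) := by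
            ext i
            refine Fin.cases ?_ (fun j => ?_) i
            · simp
            · simp [hwdef]
              field_simp
          have hmm : momMat A x = x 0 ^ (2 * ω) • momMat A (Fin.cons 1 w) := by
            rw [← aux_mom_smul hAdeg, ← hxe]
          have hpos : 0 < x 0 ^ (2 * ω) := by positivity
          have hev : ∀ i ≤ m, ip (Q i) (momMat A x) = x 0 ^ (2 * ω) * eval w (f i) := by
            intro i hi
            rw [hmm, aux_ip_smul, ← hQrep i hi, hfb1 i hi]
          have hmem : w ∈ Sset f m := by
            refine ⟨fun j => div_nonneg (hx _) hx0.le, fun i h1 h2 => ?_⟩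
            have := hJ.2 i h1 h2
            rw [hev i h2] at this
            exact (mul_eq_zero.mp this).resolve_left hpos.ne'
          rw [hev 0 (Nat.zero_le _), mul_comm]
          exact mul_le_mul_of_nonneg_left (hcle w hmem) hpos.le
      · rintro y ⟨hy, hyJ⟩ z ⟨hz, hzJ⟩ a b ha hb hab
        refine ⟨(convex_convexHull ℝ _) hy hz ha hb hab, fun hJ => ?_⟩
        rcases ha.eq_or_lt with rfl | ha'
        · obtain rfl : b = 1 := by linarith
          simp only [zero_smul, one_smul, zero_add] at hJ ⊢
          exact hzJ hJ
        rcases hb.eq_or_lt with rfl | hb'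
        · obtain rfl : a = 1 := by linarith
          simp only [zero_smul, one_smul, add_zero] at hJ ⊢
          exact hyJ hJ
        obtain rfl : a = 1 - b := by linarith
        obtain ⟨h1, h2⟩ := hface.2.2 y hy z hz b hb' (by linarith) hJ
        have e1 := mul_le_mul_of_nonneg_left (hyJ h1) ha
        have e2 := mul_le_mul_of_nonneg_left (hzJ h2) hb
        simp only [aux_ip_add, aux_ip_smul]
        linarith
    rw [hc]
    refine le_sInf ?_
    rintro _ ⟨y, ⟨X, hX, hX1, rfl⟩, rfl⟩
    refine EReal.coe_le_coe_iff.mpr ?_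
    have := (main hX.1).2 hX
    rwa [hX1, mul_one] at this
end
end
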